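/- Let X ∈ ℝ^{n×d} be a matrix every row of which has Euclidean norm at most C_X > 0, and suppose λ_min(XᵀX) ≥ λ̄_min for some λ̄_min ≥ 0. Let k ≥ 1, σ > 0, and set γ := (σ² + λ̄_min)/C_X². Assume γ > 5/2, and let X' be obtained from X by replacing exactly one row with the zero vector. Then for every α ∈ (1, 2γ/5), both D_α(M(X)‖M(X')) ≤ (k/(2γ²))·α and D_α(M(X')‖M(X)) ≤ (k/(2γ²))·α, where M denotes the Gaussian mixing mechanism with parameters k and σ; that is, the Gaussian mixing mechanism satisfies (k/(2γ²), 2γ/5)-tCDP. -/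

import Mathlib

open MeasureTheory ProbabilityTheory Matrix

/-- Law of the Gaussian random matrix with i.i.d. standard Gaussian entries. -/
noncomputable def stdGaussMat (k n : ℕ) : Measure (Fin k → Fin n → ℝ) :=
  Measure.pi fun _ => Measure.pi fun _ => gaussianReal 0 1

/-- The Gaussian mixing mechanism `M(X) = S X + σ ξ` with `S, ξ` independent
matrices of i.i.d. standard Gaussian entries: this is the law of the output. -/
noncomputable def gaussMix {n d : ℕ} (k : ℕ) (σ : ℝ) (X : Matrix (Fin n) (Fin d) ℝ) :
    Measure (Fin k → Fin d → ℝ) :=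
  Measure.map (fun p => fun i j => (∑ l, p.1 i l * X l j) + σ * p.2 i j)
    ((stdGaussMat k n).prod (stdGaussMat k d))

/-- The `α`-Rényi divergence `D_α(P‖Q) = (α-1)⁻¹ log ∫ (dP/dQ)^α dQ`. -/
noncomputable def renyiDiv {Ω : Type*} [MeasurableSpace Ω] (α : ℝ) (P Q : Measure Ω) : ℝ :=
  (α - 1)⁻¹ * Real.log (∫ x, ((P.rnDeriv Q) x).toReal ^ α ∂Q)

/-- The privacy curve `φ(α; k, ζ)`. -/
noncomputable def phi (α k ζ : ℝ) : ℝ :=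
  k * α / (2 * (α - 1)) * Real.log (1 - 1 / ζ)
    - k / (2 * (α - 1)) * Real.log (1 - α / ζ)

/-- Minimal eigenvalue of a (Hermitian) real matrix. -/
noncomputable def lamMin {d : ℕ} (A : Matrix (Fin d) (Fin d) ℝ) : ℝ :=
  if h : A.IsHermitian then ⨅ i, h.eigenvalues i else 0

/-!
The rows of `M(X)` are i.i.d. `N(0, S)` with `S = Xᵀ X + σ² I`, and zeroing the row `x` of `X`
changes `S` to `S - x xᵀ`. Put `ζ = (xᵀ S⁻¹ x)⁻¹` and `w = ζ S⁻¹ x`, so that `wᵀ x = 1`. The matrix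
`R = S - ζ x xᵀ` is positive semidefinite and kills `w`, and the two row laws are those of `r + z x`
with a common `r ∼ N(0, R)` and an independent `z ∼ N(0, ζ)`, respectively `z ∼ N(0, ζ - 1)`. As
`wᵀ r = 0` almost surely, `z = wᵀ (r + z x)` can be read off, so the Rényi divergence of the rows is
that of the two one-dimensional Gaussians. It equals `φ(α; 1, ζ)`, or `φ(α; 1, 1 - ζ)` in the
opposite direction. The eigenvalue bound and Cauchy–Schwarz give `γ ≤ ζ`, and for `5 α / 2 ≤ ζ`
elementary bounds on the logarithm give `φ ≤ α / (2 ζ²)`.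
-/

open scoped NNReal ENNReal

section LogInequalities

-- The function `u ↦ log (1 - u * s) / u` is concave; this is its tangent line at `u = 1`.
theorem log_one_sub_mul_le {s u : ℝ} (hs : 0 ≤ s) (hs' : s < 1) (hu : 0 ≤ u) (hu' : u ≤ 1) :
    Real.log (1 - u * s)
      ≤ u * (Real.log (1 - s) + (1 - u) * (s / (1 - s) + Real.log (1 - s))) := by
  let f : ℝ → ℝ := fun x =>
    u * (Real.log (1 - x) + (1 - u) * (x / (1 - x) + Real.log (1 - x))) - Real.log (1 - u * x)
  have h_pos : ∀ x ∈ Set.Ico (0 : ℝ) 1, 0 < 1 - x ∧ 0 < 1 - u * x := fun x hx =>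
    ⟨by linarith [hx.2], by nlinarith [hx.1, hx.2]⟩
  have h_deriv : ∀ x ∈ Set.Ico (0 : ℝ) 1,
      HasDerivAt f (u * (x * (1 - u)) ^ 2 / ((1 - x) ^ 2 * (1 - u * x))) x := by
    intro x hx
    obtain ⟨h1, h2⟩ := h_pos x hx
    have hsub : HasDerivAt (fun y : ℝ => 1 - y) (-1) x := (hasDerivAt_id' x).const_sub 1
    have hmul : HasDerivAt (fun y : ℝ => 1 - u * y) (-u) x := by
      simpa using ((hasDerivAt_id' x).const_mul u).const_sub 1
    refine ((((hsub.log h1.ne').add ((((hasDerivAt_id' x).div hsub h1.ne').add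
      (hsub.log h1.ne')).const_mul (1 - u))).const_mul u).sub (hmul.log h2.ne')).congr_deriv ?_
    field_simp
    ring
  have h_mono : MonotoneOn f (Set.Ico 0 1) := by
    refine monotoneOn_of_hasDerivWithinAt_nonneg (convex_Ico 0 1)
      (fun x hx => (h_deriv x hx).continuousAt.continuousWithinAt)
      (fun x hx => (h_deriv x (interior_subset hx)).hasDerivWithinAt) fun x hx => ?_
    obtain ⟨h1, h2⟩ := h_pos x (interior_subset hx)
    positivity
  have h_le := h_mono ⟨le_rfl, one_pos⟩ ⟨hs, hs'⟩ hs
  simpa [f] using h_le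

theorem log_one_sub_le_neg_sum {s : ℝ} (hs : 0 ≤ s) (hs' : s < 1) (n : ℕ) :
    Real.log (1 - s) ≤ -∑ i ∈ Finset.range n, s ^ (i + 1) / (i + 1) := by
  have h_sum := Real.hasSum_pow_div_log_of_abs_lt_one (by rwa [abs_of_nonneg hs])
  have h_le := sum_le_hasSum (Finset.range n) (fun i _ => by positivity) h_sum
  linarith

theorem div_add_log_one_sub_le_sq {s : ℝ} (hs : 0 ≤ s) (hs' : s ≤ 2 / 5) :
    s / (1 - s) + Real.log (1 - s) ≤ s ^ 2 := by
  have h_log := log_one_sub_le_neg_sum hs (by linarith) 4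
  have h_div : s / (1 - s) ≤ s + 3 / 2 * s ^ 2 + s ^ 3 / 3 + s ^ 4 / 4 := by
    rw [div_le_iff₀ (by linarith)]
    have h_fac : 0 ≤ s ^ 2 * (2 / 5 - s) * (5 / 4 + s / 12 * (2 / 5 - s)) := by
      have := sub_nonneg.2 hs'
      positivity
    nlinarith [pow_nonneg hs 3, pow_nonneg hs 4, pow_nonneg hs 5]
  norm_num [Finset.sum_range_succ] at h_log
  linarith

theorem mul_log_one_sub_sub_log_le {α t : ℝ} (hα : 1 ≤ α) (ht : 0 ≤ t) (hαt : α * t ≤ 2 / 5) :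
    α * Real.log (1 - t) - Real.log (1 - α * t) ≤ α * (α - 1) * t ^ 2 := by
  have hα0 : 0 < α := by linarith
  have hs : 0 ≤ α * t := by positivity
  have hu : α⁻¹ ≤ 1 := inv_le_one_of_one_le₀ hα
  have h_tangent := log_one_sub_mul_le hs (by linarith) (inv_nonneg.2 hα0.le) hu
  have h_slope := mul_le_mul_of_nonneg_left (div_add_log_one_sub_le_sq hs hαt) (sub_nonneg.2 hu)
  calc α * Real.log (1 - t) - Real.log (1 - α * t)
      = α * Real.log (1 - α⁻¹ * (α * t)) - Real.log (1 - α * t) := by field_simp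
    _ ≤ (1 - α⁻¹) * (α * t / (1 - α * t) + Real.log (1 - α * t)) := by
        rw [sub_le_iff_le_add', ← le_inv_mul_iff₀ hα0]
        exact h_tangent
    _ ≤ (1 - α⁻¹) * (α * t) ^ 2 := h_slope
    _ = α * (α - 1) * t ^ 2 := by field_simp

theorem neg_mul_log_one_sub_sub_log_le {β t : ℝ} (hβ : 0 ≤ β) (ht : 0 ≤ t) (ht' : t ≤ 2 / 5) :
    -(β * Real.log (1 - t)) - Real.log (1 + β * t) ≤ β * (β + 1) * t ^ 2 := by
  let f : ℝ → ℝ := fun x =>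
    β * (β + 1) * x ^ 2 + β * Real.log (1 - x) + Real.log (1 + β * x)
  have h_pos : ∀ x ∈ Set.Icc (0 : ℝ) (2 / 5), 0 < 1 - x ∧ 0 < 1 + β * x := fun x hx =>
    ⟨by linarith [hx.2], by linarith [mul_nonneg hβ hx.1]⟩
  have h_deriv : ∀ x ∈ Set.Icc (0 : ℝ) (2 / 5),
      HasDerivAt f (β * (β + 1) * x * (2 - 1 / ((1 - x) * (1 + β * x)))) x := by
    intro x hx
    obtain ⟨h1, h2⟩ := h_pos x hx
    have hsub : HasDerivAt (fun y : ℝ => 1 - y) (-1) x := (hasDerivAt_id' x).const_sub 1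
    have hadd : HasDerivAt (fun y : ℝ => 1 + β * y) β x := by
      simpa using ((hasDerivAt_id' x).const_mul β).const_add 1
    refine ((((hasDerivAt_pow 2 x).const_mul (β * (β + 1))).add
      ((hsub.log h1.ne').const_mul β)).add (hadd.log h2.ne')).congr_deriv ?_
    push_cast
    field_simp
    ring
  have h_mono : MonotoneOn f (Set.Icc 0 (2 / 5)) := by
    refine monotoneOn_of_hasDerivWithinAt_nonneg (convex_Icc 0 (2 / 5))
      (fun x hx => (h_deriv x hx).continuousAt.continuousWithinAt)
      (fun x hx => (h_deriv x (interior_subset hx)).hasDerivWithinAt) fun x hx => ?_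
    have hx := interior_subset hx
    have h_half : 1 / 2 ≤ (1 - x) * (1 + β * x) := by
      nlinarith [hx.2, mul_nonneg hβ hx.1]
    have h_inv : 1 / ((1 - x) * (1 + β * x)) ≤ 2 := by
      rw [div_le_iff₀ (by linarith)]
      linarith
    have hx0 := hx.1
    have := sub_nonneg.2 h_inv
    positivity
  have h_le := h_mono ⟨le_rfl, by norm_num⟩ ⟨ht, ht'⟩ ht
  simp only [f, mul_zero, sub_zero, add_zero, Real.log_one, zero_pow two_ne_zero] at h_le
  linarith

theorem phi_eq (α k ζ : ℝ) :
    phi α k ζ = k / (2 * (α - 1)) * (α * Real.log (1 - 1 / ζ) - Real.log (1 - α / ζ)) := by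
  rw [phi]
  ring

theorem phi_eq_mul_phi_one (α k ζ : ℝ) : phi α k ζ = k * phi α 1 ζ := by
  rw [phi_eq, phi_eq]
  ring

theorem phi_le {α k ζ : ℝ} (hk : 0 ≤ k) (hα : 1 < α) (hζ : 5 / 2 * α ≤ ζ) :
    phi α k ζ ≤ k / (2 * ζ ^ 2) * α := by
  have hζ0 : 0 < ζ := by linarith
  have hα1 : 0 < α - 1 := by linarith
  have h_log := mul_log_one_sub_sub_log_le hα.le (one_div_nonneg.2 hζ0.le)
    (by rw [mul_one_div, div_le_iff₀ hζ0]; linarith)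
  rw [mul_one_div] at h_log
  calc phi α k ζ
      ≤ k / (2 * (α - 1)) * (α * (α - 1) * (1 / ζ) ^ 2) := by rw [phi_eq]; gcongr
    _ = k / (2 * ζ ^ 2) * α := by field_simp

theorem phi_one_sub_le {α k ζ : ℝ} (hk : 0 ≤ k) (hα : 1 < α) (hζ : 5 / 2 ≤ ζ) :
    phi α k (1 - ζ) ≤ k / (2 * ζ ^ 2) * α := by
  have hζ1 : 0 < ζ - 1 := by linarith
  have hα1 : 0 < α - 1 := by linarith
  have hζ0 : 0 < ζ := by linarith
  have h_one : 1 - 1 / (1 - ζ) = (1 - 1 / ζ)⁻¹ := by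
    have : 1 - ζ ≠ 0 := by linarith
    field_simp
    ring
  have h_α : 1 - α / (1 - ζ) = (1 + (α - 1) * (1 / ζ)) * (1 - 1 / ζ)⁻¹ := by
    have : 1 - ζ ≠ 0 := by linarith
    field_simp
    ring
  have h_sub : 0 < 1 - 1 / ζ := by rw [sub_pos, div_lt_one hζ0]; linarith
  have h_log := neg_mul_log_one_sub_sub_log_le hα1.le (one_div_nonneg.2 hζ0.le)
    (by rw [div_le_iff₀ hζ0]; linarith)
  calc phi α k (1 - ζ)
      = k / (2 * (α - 1)) * (-((α - 1) * Real.log (1 - 1 / ζ))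
          - Real.log (1 + (α - 1) * (1 / ζ))) := by
        rw [phi_eq, h_one, h_α, Real.log_mul (by positivity) (by positivity), Real.log_inv]
        ring
    _ ≤ k / (2 * (α - 1)) * ((α - 1) * (α - 1 + 1) * (1 / ζ) ^ 2) := by gcongr
    _ = k / (2 * ζ ^ 2) * α := by field_simp; ring

end LogInequalities

section RenyiDivergence

variable {Ω Ω' : Type*} [MeasurableSpace Ω] [MeasurableSpace Ω'] {P Q : Measure Ω}

theorem renyiDiv_self (α : ℝ) (P : Measure Ω) [IsProbabilityMeasure P] : renyiDiv α P P = 0 := by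
  have h_one : (fun x => (P.rnDeriv P x).toReal ^ α) =ᵐ[P] fun _ => 1 := by
    filter_upwards [P.rnDeriv_self] with x hx
    simp [hx]
  simp [renyiDiv, integral_congr_ae h_one]

theorem renyiDiv_withDensity (α : ℝ) (Q : Measure Ω) [SigmaFinite Q] {f : Ω → ℝ≥0∞}
    (hf : Measurable f) :
    renyiDiv α (Q.withDensity f) Q = (α - 1)⁻¹ * Real.log (∫ x, (f x).toReal ^ α ∂Q) := by
  have h_ae : (fun x => ((Q.withDensity f).rnDeriv Q x).toReal ^ α)
      =ᵐ[Q] fun x => (f x).toReal ^ α := by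
    filter_upwards [Q.rnDeriv_withDensity hf] with x hx
    rw [hx]
  rw [renyiDiv, integral_congr_ae h_ae]

theorem renyiDiv_map_of_ae_leftInverse (α : ℝ) [SigmaFinite P] [IsFiniteMeasure Q] (hPQ : P ≪ Q)
    {Φ : Ω → Ω'} {Ψ : Ω' → Ω} (hΦ : Measurable Φ) (hΨ : Measurable Ψ)
    (h_inv : ∀ᵐ x ∂Q, Ψ (Φ x) = x) :
    renyiDiv α (P.map Φ) (Q.map Φ) = renyiDiv α P Q := by
  have h_density : Measurable (P.rnDeriv Q ∘ Ψ) := (P.measurable_rnDeriv Q).comp hΨ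
  have h_map : P.map Φ = (Q.map Φ).withDensity (P.rnDeriv Q ∘ Ψ) := by
    ext s hs
    rw [Measure.map_apply hΦ hs, withDensity_apply _ hs, setLIntegral_map hs h_density hΦ,
      ← Measure.setLIntegral_rnDeriv hPQ]
    refine lintegral_congr_ae (ae_restrict_of_ae ?_)
    filter_upwards [h_inv] with x hx
    rw [Function.comp_apply, hx]
  have h_ae : (fun x => ((P.rnDeriv Q ∘ Ψ) (Φ x)).toReal ^ α)
      =ᵐ[Q] fun x => (P.rnDeriv Q x).toReal ^ α := by
    filter_upwards [h_inv] with x hx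
    rw [Function.comp_apply, hx]
  rw [h_map, renyiDiv_withDensity α _ h_density, integral_map hΦ.aemeasurable
    (h_density.ennreal_toReal.pow_const α).aestronglyMeasurable, integral_congr_ae h_ae, renyiDiv]

theorem renyiDiv_prod_right (α : ℝ) [SigmaFinite P] [SigmaFinite Q] (hPQ : P ≪ Q)
    (κ : Measure Ω') [IsProbabilityMeasure κ] :
    renyiDiv α (P.prod κ) (Q.prod κ) = renyiDiv α P Q := by
  have h_density : Measurable (P.rnDeriv Q) := P.measurable_rnDeriv Q
  have : SigmaFinite (Q.withDensity (P.rnDeriv Q)) := by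
    rwa [Measure.withDensity_rnDeriv_eq P Q hPQ]
  have h_prod : P.prod κ = (Q.prod κ).withDensity fun z => P.rnDeriv Q z.1 := by
    rw [← prod_withDensity_left h_density, Measure.withDensity_rnDeriv_eq P Q hPQ]
  rw [h_prod, renyiDiv_withDensity α _ (by fun_prop),
    integral_fun_fst fun x => (P.rnDeriv Q x).toReal ^ α]
  simp [renyiDiv]

theorem lintegral_pi_prod {ι : Type*} [Fintype ι] {E : ι → Type*} [∀ i, MeasurableSpace (E i)]
    (μ : ∀ i, Measure (E i)) [∀ i, IsProbabilityMeasure (μ i)] {f : ∀ i, E i → ℝ≥0∞}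
    (hf : ∀ i, Measurable (f i)) :
    ∫⁻ x, ∏ i, f i (x i) ∂Measure.pi μ = ∏ i, ∫⁻ y, f i y ∂μ i := by
  rw [lintegral_prod_eq_prod_lintegral_of_indepFun Finset.univ (fun i (x : ∀ i, E i) => f i (x i))
    (iIndepFun_pi fun i => (hf i).aemeasurable) (by fun_prop)]
  exact Finset.prod_congr rfl fun i _ =>
    (measurePreserving_eval μ i).lintegral_comp (hf i)

theorem pi_withDensity {ι : Type*} [Fintype ι] {E : ι → Type*} [∀ i, MeasurableSpace (E i)]
    (μ : ∀ i, Measure (E i)) [∀ i, IsProbabilityMeasure (μ i)] {f : ∀ i, E i → ℝ≥0∞}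
    (hf : ∀ i, Measurable (f i)) [∀ i, SigmaFinite ((μ i).withDensity (f i))] :
    Measure.pi (fun i => (μ i).withDensity (f i))
      = (Measure.pi μ).withDensity fun x => ∏ i, f i (x i) := by
  refine Measure.pi_eq fun s hs => ?_
  have h_indicator (x : ∀ i, E i) : (Set.univ.pi s).indicator (fun x => ∏ i, f i (x i)) x
      = ∏ i, (s i).indicator (f i) (x i) := by
    by_cases hx : x ∈ Set.univ.pi s
    · rw [Set.indicator_of_mem hx]
      exact Finset.prod_congr rfl fun i _ => (Set.indicator_of_mem (hx i trivial) _).symm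
    · obtain ⟨i, hi⟩ : ∃ i, x i ∉ s i := by simpa [Set.mem_pi] using hx
      rw [Set.indicator_of_notMem hx,
        Finset.prod_eq_zero (Finset.mem_univ i) (Set.indicator_of_notMem hi _)]
  rw [withDensity_apply _ (MeasurableSet.univ_pi hs),
    ← lintegral_indicator (MeasurableSet.univ_pi hs), lintegral_congr h_indicator,
    lintegral_pi_prod μ fun i => (hf i).indicator (hs i)]
  simp_rw [lintegral_indicator (hs _), withDensity_apply _ (hs _)]

theorem renyiDiv_pi {ι : Type*} [Fintype ι] (α : ℝ) [SigmaFinite P]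
    [IsProbabilityMeasure Q] (hPQ : P ≪ Q) :
    renyiDiv α (Measure.pi fun _ : ι => P) (Measure.pi fun _ : ι => Q)
      = Fintype.card ι * renyiDiv α P Q := by
  have h_density : Measurable (P.rnDeriv Q) := P.measurable_rnDeriv Q
  have : SigmaFinite (Q.withDensity (P.rnDeriv Q)) := by
    rwa [Measure.withDensity_rnDeriv_eq P Q hPQ]
  have h_pi : Measure.pi (fun _ : ι => P)
      = (Measure.pi fun _ : ι => Q).withDensity fun x => ∏ i, P.rnDeriv Q (x i) := by
    rw [← pi_withDensity (fun _ => Q) fun _ => h_density, Measure.withDensity_rnDeriv_eq P Q hPQ]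
  rw [h_pi, renyiDiv_withDensity α _ (by fun_prop)]
  simp_rw [ENNReal.toReal_prod, ← Real.finsetProd_rpow _ _ fun _ _ => ENNReal.toReal_nonneg]
  rw [integral_fintype_prod_eq_pow fun x => (P.rnDeriv Q x).toReal ^ α, Real.log_pow, renyiDiv]
  ring

end RenyiDivergence

section GaussianReal

theorem renyiDiv_withDensity_ofReal {Ω : Type*} [MeasurableSpace Ω] (α : ℝ) (μ : Measure Ω)
    [SigmaFinite μ] {p q : Ω → ℝ} (hp : Measurable p) (hq : Measurable q) (hp0 : ∀ x, 0 ≤ p x)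
    (hq0 : ∀ x, 0 < q x) :
    renyiDiv α (μ.withDensity fun x => ENNReal.ofReal (p x))
        (μ.withDensity fun x => ENNReal.ofReal (q x))
      = (α - 1)⁻¹ * Real.log (∫ x, p x ^ α * q x ^ (1 - α) ∂μ) := by
  have h_meas : Measurable fun x => ENNReal.ofReal (p x / q x) := by fun_prop
  have h_ratio : (μ.withDensity fun x => ENNReal.ofReal (p x))
      = (μ.withDensity fun x => ENNReal.ofReal (q x)).withDensity
        fun x => ENNReal.ofReal (p x / q x) := by
    rw [← withDensity_mul _ hq.ennreal_ofReal h_meas]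
    congr with x
    rw [Pi.mul_apply, ← ENNReal.ofReal_mul (hq0 x).le, mul_div_cancel₀ _ (hq0 x).ne']
  rw [h_ratio, renyiDiv_withDensity α _ h_meas,
    integral_withDensity_eq_integral_toReal_smul hq.ennreal_ofReal
      (ae_of_all _ fun _ => ENNReal.ofReal_lt_top)]
  congr with x
  rw [ENNReal.toReal_ofReal (hq0 x).le, ENNReal.toReal_ofReal (div_nonneg (hp0 x) (hq0 x).le),
    Real.div_rpow (hp0 x) (hq0 x).le, Real.rpow_sub (hq0 x), Real.rpow_one, smul_eq_mul]
  ring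

theorem log_integral_const_mul_exp {b c : ℝ} (hb : 0 < b) (hc : 0 < c) (m : ℝ) :
    Real.log (∫ x : ℝ, c * Real.exp (-b * (x - m) ^ 2))
      = Real.log c + (Real.log Real.pi - Real.log b) / 2 := by
  rw [integral_const_mul, integral_sub_right_eq_self (fun x => Real.exp (-b * x ^ 2)),
    integral_gaussian, Real.log_mul hc.ne' (by positivity), Real.log_sqrt (by positivity),
    Real.log_div Real.pi_ne_zero hb.ne']

theorem renyiDiv_gaussianReal (α m : ℝ) {v₁ v₂ : ℝ≥0} (h₁ : v₁ ≠ 0) (h₂ : v₂ ≠ 0)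
    (h_pos : 0 < α * v₂ + (1 - α) * v₁) :
    renyiDiv α (gaussianReal m v₁) (gaussianReal m v₂) = (2 * (α - 1))⁻¹
      * (α * Real.log v₂ + (1 - α) * Real.log v₁ - Real.log (α * v₂ + (1 - α) * v₁)) := by
  have hv₁ : (0 : ℝ) < v₁ := by positivity
  have hv₂ : (0 : ℝ) < v₂ := by positivity
  let c : ℝ := (√(2 * Real.pi * v₁))⁻¹ ^ α * (√(2 * Real.pi * v₂))⁻¹ ^ (1 - α)
  have h_integrand (x : ℝ) : gaussianPDFReal m v₁ x ^ α * gaussianPDFReal m v₂ x ^ (1 - α)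
      = c * Real.exp (-((α * v₂ + (1 - α) * v₁) / (2 * v₁ * v₂)) * (x - m) ^ 2) := by
    rw [gaussianPDFReal, gaussianPDFReal, Real.mul_rpow (by positivity) (by positivity),
      Real.mul_rpow (by positivity) (by positivity), ← Real.exp_mul, ← Real.exp_mul,
      mul_mul_mul_comm, ← Real.exp_add]
    congr 2
    field_simp
    ring
  have h_log_c : Real.log c = -(α * (Real.log (2 * Real.pi) + Real.log v₁)
      + (1 - α) * (Real.log (2 * Real.pi) + Real.log v₂)) / 2 := by
    rw [Real.log_mul (by positivity) (by positivity), Real.log_rpow (by positivity),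
      Real.log_rpow (by positivity), Real.log_inv, Real.log_inv, Real.log_sqrt (by positivity),
      Real.log_sqrt (by positivity), Real.log_mul (by positivity) hv₁.ne',
      Real.log_mul (by positivity) hv₂.ne']
    ring
  rw [gaussianReal_of_var_ne_zero _ h₁, gaussianReal_of_var_ne_zero _ h₂]
  simp only [gaussianPDF_def]
  rw [renyiDiv_withDensity_ofReal α volume (measurable_gaussianPDFReal m v₁)
    (measurable_gaussianPDFReal m v₂) (gaussianPDFReal_nonneg m v₁)
    fun x => gaussianPDFReal_pos m v₂ x h₂]
  simp_rw [h_integrand]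
  rw [log_integral_const_mul_exp (c := c) (by positivity) (by positivity) m, h_log_c,
    Real.log_div h_pos.ne' (by positivity), Real.log_mul (by positivity) hv₂.ne',
    Real.log_mul two_ne_zero hv₁.ne', Real.log_mul two_ne_zero Real.pi_ne_zero, mul_inv]
  ring

-- For `v₁ = v₂` the identity reads `0 = 0` because `v₁ / 0 = 0` and `1 / 0 = α / 0 = 0`.
theorem renyiDiv_gaussianReal_eq_phi {α : ℝ} (m : ℝ) {v₁ v₂ : ℝ≥0} (h₁ : v₁ ≠ 0) (h₂ : v₂ ≠ 0)
    (h_pos : 0 < α * v₂ + (1 - α) * v₁) :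
    renyiDiv α (gaussianReal m v₁) (gaussianReal m v₂) = phi α 1 (v₁ / (v₁ - v₂)) := by
  have hv₁ : (v₁ : ℝ) ≠ 0 := by positivity
  have hv₂ : (v₂ : ℝ) ≠ 0 := by positivity
  have h_one : 1 - 1 / (v₁ / (v₁ - v₂) : ℝ) = v₂ / v₁ := by
    field_simp
    ring
  have h_α : 1 - α / (v₁ / (v₁ - v₂) : ℝ) = (α * v₂ + (1 - α) * v₁) / v₁ := by
    field_simp
    ring
  rw [renyiDiv_gaussianReal α m h₁ h₂ h_pos, phi_eq, h_one, h_α, Real.log_div hv₂ hv₁,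
    Real.log_div h_pos.ne' hv₁]
  ring

end GaussianReal

section MultivariateGaussian

theorem posSemidef_smul_vecMulVec {ι : Type*} [Finite ι] (v : ℝ≥0) (x : ι → ℝ) :
    ((v : ℝ) • vecMulVec x x).PosSemidef := by
  simpa using (posSemidef_vecMulVec_self_star x).smul v.coe_nonneg

variable {ι κ : Type*} [Fintype ι]

theorem posSemidef_sub_smul_vecMulVec {S : Matrix ι ι ℝ} (hS : S.PosSemidef) {w x : ι → ℝ}
    {c : ℝ} (hSw : S *ᵥ w = c • x) (hwx : w ⬝ᵥ x = 1) :
    (S - c • vecMulVec x x).PosSemidef := by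
  have hxx : (c • vecMulVec x x).IsHermitian := by
    simp [IsHermitian]
  refine .of_dotProduct_mulVec_nonneg (hS.isHermitian.sub hxx) fun y => ?_
  have h_symm : w ⬝ᵥ S *ᵥ y = c * (y ⬝ᵥ x) := by
    rw [dotProduct_mulVec, ← mulVec_transpose, ← conjTranspose_eq_transpose_of_trivial,
      hS.isHermitian.eq, hSw, smul_dotProduct, smul_eq_mul, dotProduct_comm]
  calc (0 : ℝ) ≤ (y - (y ⬝ᵥ x) • w) ⬝ᵥ S *ᵥ (y - (y ⬝ᵥ x) • w) := by
        simpa using hS.dotProduct_mulVec_nonneg (y - (y ⬝ᵥ x) • w)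
    _ = star y ⬝ᵥ (S - c • vecMulVec x x) *ᵥ y := by
        simp only [star_trivial, mulVec_sub, mulVec_smul, sub_mulVec, smul_mulVec,
          vecMulVec_mulVec, hSw, h_symm, hwx, sub_dotProduct, dotProduct_sub, smul_dotProduct,
          dotProduct_smul, op_smul_eq_smul, smul_eq_mul, dotProduct_comm x y]
        ring

variable [DecidableEq ι] [Fintype κ] [DecidableEq κ]

theorem multivariateGaussian_conv {R S : Matrix ι ι ℝ} (hR : R.PosSemidef) (hS : S.PosSemidef)
    (m₁ m₂ : EuclideanSpace ℝ ι) :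
    multivariateGaussian m₁ R ∗ multivariateGaussian m₂ S
      = multivariateGaussian (m₁ + m₂) (R + S) := by
  refine Measure.ext_of_charFun (funext fun t => ?_)
  rw [charFun_conv, charFun_multivariateGaussian hR, charFun_multivariateGaussian hS,
    charFun_multivariateGaussian (hR.add hS), ← Complex.exp_add, inner_add_right, add_mulVec,
    dotProduct_add]
  push_cast
  ring_nf

theorem multivariateGaussian_map_mulVec {S : Matrix ι ι ℝ} (hS : S.PosSemidef)
    (A : Matrix κ ι ℝ) :
    (multivariateGaussian 0 S).map (fun x : EuclideanSpace ℝ ι => WithLp.toLp 2 (A *ᵥ x))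
      = multivariateGaussian 0 (A * S * Aᵀ) := by
  have hA : Measurable fun x : EuclideanSpace ℝ ι => WithLp.toLp 2 (A *ᵥ x) := by fun_prop
  have : IsProbabilityMeasure ((multivariateGaussian 0 S).map
      fun x : EuclideanSpace ℝ ι => WithLp.toLp 2 (A *ᵥ x)) :=
    Measure.isProbabilityMeasure_map hA.aemeasurable
  have h_inner (x : EuclideanSpace ℝ ι) (t : EuclideanSpace ℝ κ) :
      inner ℝ (WithLp.toLp 2 (A *ᵥ x)) t = inner ℝ x (WithLp.toLp 2 (Aᵀ *ᵥ t)) := by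
    simp only [EuclideanSpace.inner_eq_star_dotProduct, star_trivial, dotProduct_mulVec,
      mulVec_transpose]
  refine Measure.ext_of_charFun (funext fun t => ?_)
  rw [charFun_apply, integral_map hA.aemeasurable (by fun_prop)]
  simp_rw [h_inner]
  have h_form (t : κ → ℝ) :
      (Aᵀ *ᵥ t) ⬝ᵥ S *ᵥ (Aᵀ *ᵥ t) = t ⬝ᵥ (A * S * Aᵀ) *ᵥ t := by
    simp only [← mulVec_mulVec, dotProduct_mulVec t A, ← mulVec_transpose A]
  have hAS : (A * S * Aᵀ).PosSemidef := by simpa using hS.mul_mul_conjTranspose_same A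
  rw [← charFun_apply, charFun_multivariateGaussian hS, charFun_multivariateGaussian hAS,
    inner_zero_right, inner_zero_right, h_form]

theorem multivariateGaussian_zero_zero :
    multivariateGaussian 0 (0 : Matrix ι ι ℝ) = Measure.dirac 0 := by
  simp [multivariateGaussian]

theorem ae_dotProduct_eq_zero {R : Matrix ι ι ℝ} (hR : R.PosSemidef) {w : ι → ℝ}
    (hw : R *ᵥ w = 0) : ∀ᵐ r : EuclideanSpace ℝ ι ∂multivariateGaussian 0 R, w ⬝ᵥ r = 0 := by
  have h := multivariateGaussian_map_mulVec hR (replicateRow Unit w)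
  have : R * (replicateRow Unit w)ᵀ = 0 := by
    ext i _
    exact congrFun hw i
  rw [Matrix.mul_assoc, this, Matrix.mul_zero, multivariateGaussian_zero_zero] at h
  have h_ae : ∀ᵐ y ∂(multivariateGaussian 0 R).map
      fun r : EuclideanSpace ℝ ι => WithLp.toLp 2 (replicateRow Unit w *ᵥ r), y = 0 := by
    rw [h, ae_dirac_eq]
    exact Filter.eventually_pure.2 rfl
  filter_upwards [ae_of_ae_map (by fun_prop) h_ae] with r hr
  exact congrArg (fun y : EuclideanSpace ℝ Unit => y ()) hr

theorem gaussianReal_map_smul (v : ℝ≥0) (x : EuclideanSpace ℝ ι) :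
    (gaussianReal 0 v).map (fun z => z • x)
      = multivariateGaussian 0 ((v : ℝ) • vecMulVec x x) := by
  have h_meas : Measurable fun z : ℝ => z • x := by fun_prop
  have : IsProbabilityMeasure ((gaussianReal 0 v).map fun z => z • x) :=
    Measure.isProbabilityMeasure_map h_meas.aemeasurable
  have h_form (t : ι → ℝ) : t ⬝ᵥ ((v : ℝ) • vecMulVec x x) *ᵥ t = v * (t ⬝ᵥ x) ^ 2 := by
    simp only [smul_mulVec, vecMulVec_mulVec, dotProduct_smul, op_smul_eq_smul, smul_eq_mul,
      dotProduct_comm x.ofLp t]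
    ring
  refine Measure.ext_of_charFun (funext fun t => ?_)
  rw [charFun_apply, integral_map h_meas.aemeasurable (by fun_prop),
    charFun_multivariateGaussian (posSemidef_smul_vecMulVec v x), h_form, inner_zero_right]
  simp_rw [real_inner_smul_left, mul_comm _ (inner ℝ x t), Complex.ofReal_mul]
  rw [← charFun_apply_real, charFun_gaussianReal, EuclideanSpace.inner_eq_star_dotProduct]
  simp

theorem multivariateGaussian_add_vecMulVec {R : Matrix ι ι ℝ} (hR : R.PosSemidef) (v : ℝ≥0)
    (x : EuclideanSpace ℝ ι) :
    multivariateGaussian 0 (R + (v : ℝ) • vecMulVec x x)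
      = ((gaussianReal 0 v).prod (multivariateGaussian 0 R)).map fun p => p.1 • x + p.2 := by
  have h_map := Measure.map_prod_map (gaussianReal 0 v) (multivariateGaussian 0 R)
    (f := fun z => z • x) (by fun_prop) measurable_id
  rw [Measure.map_id, gaussianReal_map_smul] at h_map
  rw [add_comm R, ← add_zero (0 : EuclideanSpace ℝ ι),
    ← multivariateGaussian_conv (posSemidef_smul_vecMulVec v x) hR, Measure.conv, h_map,
    Measure.map_map (by fun_prop) (by fun_prop)]
  simp only [Function.comp_def, Prod.map_fst, Prod.map_snd, id_eq, add_zero]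

theorem gaussianReal_absolutelyContinuous_gaussianReal (m : ℝ) {v₁ v₂ : ℝ≥0} (h₁ : v₁ ≠ 0)
    (h₂ : v₂ ≠ 0) : gaussianReal m v₁ ≪ gaussianReal m v₂ :=
  (gaussianReal_absolutelyContinuous m h₁).trans (gaussianReal_absolutelyContinuous' m h₂)

theorem multivariateGaussian_add_vecMulVec_absolutelyContinuous {R : Matrix ι ι ℝ}
    (hR : R.PosSemidef) (x : EuclideanSpace ℝ ι) {v₁ v₂ : ℝ≥0} (h₁ : v₁ ≠ 0) (h₂ : v₂ ≠ 0) :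
    multivariateGaussian 0 (R + (v₁ : ℝ) • vecMulVec x x)
      ≪ multivariateGaussian 0 (R + (v₂ : ℝ) • vecMulVec x x) := by
  rw [multivariateGaussian_add_vecMulVec hR, multivariateGaussian_add_vecMulVec hR]
  exact ((gaussianReal_absolutelyContinuous_gaussianReal 0 h₁ h₂).prod .rfl).map (by fun_prop)

-- Under either law `r + z • x` determines `z = w ⬝ᵥ (r + z • x)`, because `w ⬝ᵥ r = 0` almost
-- surely; the divergence is therefore that of the laws of `z`.
theorem renyiDiv_multivariateGaussian_add_vecMulVec (α : ℝ) {R : Matrix ι ι ℝ}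
    (hR : R.PosSemidef) {w : ι → ℝ} (hRw : R *ᵥ w = 0) {x : EuclideanSpace ℝ ι}
    (hwx : w ⬝ᵥ x = 1) {v₁ v₂ : ℝ≥0} (h₁ : v₁ ≠ 0) (h₂ : v₂ ≠ 0) :
    renyiDiv α (multivariateGaussian 0 (R + (v₁ : ℝ) • vecMulVec x x))
        (multivariateGaussian 0 (R + (v₂ : ℝ) • vecMulVec x x))
      = renyiDiv α (gaussianReal 0 v₁) (gaussianReal 0 v₂) := by
  have h_ac := gaussianReal_absolutelyContinuous_gaussianReal 0 h₁ h₂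
  let Ψ : EuclideanSpace ℝ ι → ℝ × EuclideanSpace ℝ ι := fun y => (w ⬝ᵥ y, y - (w ⬝ᵥ y) • x)
  have hΨ : Measurable Ψ := by fun_prop
  have h_inv : ∀ᵐ p ∂(gaussianReal 0 v₂).prod (multivariateGaussian 0 R),
      Ψ (p.1 • x + p.2) = p := by
    filter_upwards [Measure.quasiMeasurePreserving_snd.ae (ae_dotProduct_eq_zero hR hRw)]
      with p hp
    have h_fst : w ⬝ᵥ (p.1 • x + p.2).ofLp = p.1 := by simp [dotProduct_add, hwx, hp]
    simp only [Ψ, h_fst, add_sub_cancel_left]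
  rw [multivariateGaussian_add_vecMulVec hR, multivariateGaussian_add_vecMulVec hR,
    renyiDiv_map_of_ae_leftInverse α (h_ac.prod Measure.AbsolutelyContinuous.rfl) (by fun_prop)
      hΨ h_inv, renyiDiv_prod_right α h_ac]

/-- The reciprocal `(xᵀ S⁻¹ x)⁻¹` of the leverage score of `x` with respect to `S`. For positive
definite `S` and `x ≠ 0` it is the largest `c` for which `S - c • x xᵀ` is positive semidefinite. -/
noncomputable def invLeverage (S : Matrix ι ι ℝ) (x : ι → ℝ) : ℝ :=
  (x ⬝ᵥ S⁻¹ *ᵥ x)⁻¹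

theorem invLeverage_pos {S : Matrix ι ι ℝ} (hS : S.PosDef) {x : ι → ℝ} (hx : x ≠ 0) :
    0 < invLeverage S x :=
  inv_pos.2 (by simpa using hS.inv.dotProduct_mulVec_pos hx)

theorem mulVec_invLeverage_smul_inv {S : Matrix ι ι ℝ} (hS : S.PosDef) (x : ι → ℝ) :
    S *ᵥ (invLeverage S x • S⁻¹ *ᵥ x) = invLeverage S x • x := by
  rw [mulVec_smul, mulVec_mulVec, mul_nonsing_inv S hS.det_pos.ne'.isUnit, one_mulVec]

theorem invLeverage_smul_inv_dotProduct {S : Matrix ι ι ℝ} (hS : S.PosDef) {x : ι → ℝ}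
    (hx : x ≠ 0) : (invLeverage S x • S⁻¹ *ᵥ x) ⬝ᵥ x = 1 := by
  rw [smul_dotProduct, dotProduct_comm, smul_eq_mul, invLeverage,
    inv_mul_cancel₀ (inv_pos.1 (invLeverage_pos hS hx)).ne']

theorem posSemidef_sub_invLeverage_smul {S : Matrix ι ι ℝ} (hS : S.PosDef) {x : ι → ℝ}
    (hx : x ≠ 0) : (S - invLeverage S x • vecMulVec x x).PosSemidef :=
  posSemidef_sub_smul_vecMulVec hS.posSemidef (mulVec_invLeverage_smul_inv hS x)
    (invLeverage_smul_inv_dotProduct hS hx)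

theorem sub_invLeverage_smul_mulVec {S : Matrix ι ι ℝ} (hS : S.PosDef) {x : ι → ℝ} (hx : x ≠ 0) :
    (S - invLeverage S x • vecMulVec x x) *ᵥ (invLeverage S x • S⁻¹ *ᵥ x) = 0 := by
  rw [sub_mulVec, mulVec_invLeverage_smul_inv hS, smul_mulVec, vecMulVec_mulVec,
    dotProduct_comm, invLeverage_smul_inv_dotProduct hS hx, MulOpposite.op_one, one_smul, sub_self]

end MultivariateGaussian

section GaussianMixing

variable {n m d : ℕ}

theorem multivariateGaussian_zero_one_map_ofLp {ι : Type*} [Fintype ι] [DecidableEq ι] :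
    (multivariateGaussian 0 (1 : Matrix ι ι ℝ)).map WithLp.ofLp
      = Measure.pi fun _ => gaussianReal 0 1 := by
  rw [multivariateGaussian_zero_one, ← map_pi_eq_stdGaussian,
    Measure.map_map (by fun_prop) (by fun_prop)]
  exact Measure.map_id

theorem gram_add_sq_posDef {σ : ℝ} (hσ : 0 < σ) (X : Matrix (Fin n) (Fin d) ℝ) :
    (Xᵀ * X + σ ^ 2 • 1).PosDef :=
  (PosDef.one.smul (by positivity)).posSemidef_add (posSemidef_conjTranspose_mul_self X)

theorem gaussMix_row_eq_multivariateGaussian (σ : ℝ) (X : Matrix (Fin n) (Fin d) ℝ) :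
    ((Measure.pi fun _ => gaussianReal 0 1).prod (Measure.pi fun _ => gaussianReal 0 1)).map
        (fun p : (Fin n → ℝ) × (Fin d → ℝ) => fun j => (∑ l, p.1 l * X l j) + σ * p.2 j)
      = (multivariateGaussian 0 (Xᵀ * X + σ ^ 2 • 1)).map WithLp.ofLp := by
  have h_mix := multivariateGaussian_map_mulVec PosSemidef.one Xᵀ
  have h_noise := multivariateGaussian_map_mulVec PosSemidef.one
    (σ • (1 : Matrix (Fin d) (Fin d) ℝ))
  have h_scalar : σ • 1 * 1 * (σ • 1)ᵀ = σ ^ 2 • (1 : Matrix (Fin d) (Fin d) ℝ) := by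
    simp [smul_smul, sq]
  rw [Matrix.mul_one, transpose_transpose] at h_mix
  rw [h_scalar] at h_noise
  have h_conv := multivariateGaussian_conv (posSemidef_conjTranspose_mul_self X)
    (PosSemidef.one.smul (sq_nonneg σ)) 0 (0 : EuclideanSpace ℝ (Fin d))
  rw [conjTranspose_eq_transpose_of_trivial, add_zero] at h_conv
  rw [← h_conv, ← h_mix, ← h_noise, Measure.conv,
    Measure.map_prod_map _ _ (by fun_prop) (by fun_prop),
    ← multivariateGaussian_zero_one_map_ofLp, ← multivariateGaussian_zero_one_map_ofLp,
    Measure.map_prod_map _ _ (by fun_prop) (by fun_prop),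
    Measure.map_map (by fun_prop) (by fun_prop), Measure.map_map (by fun_prop) (by fun_prop),
    Measure.map_map (by fun_prop) (by fun_prop)]
  refine congrArg (Measure.map · _) ?_
  ext p j
  simp [mulVec, dotProduct, smul_mulVec, mul_comm]

theorem gaussMix_eq_pi (k : ℕ) (σ : ℝ) (X : Matrix (Fin n) (Fin d) ℝ) :
    gaussMix k σ X = Measure.pi fun _ =>
      (multivariateGaussian 0 (Xᵀ * X + σ ^ 2 • 1)).map WithLp.ofLp := by
  simp only [gaussMix, stdGaussMat]
  rw [← (measurePreserving_arrowProdEquivProdArrow _ _ _ _ _).map_eq,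
    Measure.map_map (by fun_prop) (by fun_prop), ← gaussMix_row_eq_multivariateGaussian σ X]
  have (_ : Fin k) : IsProbabilityMeasure (((Measure.pi fun _ => gaussianReal 0 1).prod
      (Measure.pi fun _ => gaussianReal 0 1)).map
        fun p : (Fin n → ℝ) × (Fin d → ℝ) => fun j => (∑ l, p.1 l * X l j) + σ * p.2 j) :=
    Measure.isProbabilityMeasure_map (by fun_prop)
  rw [← Measure.pi_map_pi (fun _ => by fun_prop)]
  rfl

instance isProbabilityMeasure_gaussMix (k : ℕ) (σ : ℝ) (X : Matrix (Fin n) (Fin d) ℝ) :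
    IsProbabilityMeasure (gaussMix k σ X) := by
  have : IsProbabilityMeasure ((multivariateGaussian 0 (Xᵀ * X + σ ^ 2 • 1)).map WithLp.ofLp) :=
    Measure.isProbabilityMeasure_map (by fun_prop)
  rw [gaussMix_eq_pi]
  infer_instance

theorem renyiDiv_gaussMix_of_gram_eq {α σ v₁ v₂ : ℝ} (k : ℕ) {X : Matrix (Fin n) (Fin d) ℝ}
    {Y : Matrix (Fin m) (Fin d) ℝ} {R : Matrix (Fin d) (Fin d) ℝ} (hR : R.PosSemidef)
    {w x : Fin d → ℝ} (hRw : R *ᵥ w = 0) (hwx : w ⬝ᵥ x = 1) (h₁ : 0 < v₁) (h₂ : 0 < v₂)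
    (hX : Xᵀ * X + σ ^ 2 • 1 = R + v₁ • vecMulVec x x)
    (hY : Yᵀ * Y + σ ^ 2 • 1 = R + v₂ • vecMulVec x x) (h_pos : 0 < α * v₂ + (1 - α) * v₁) :
    renyiDiv α (gaussMix k σ X) (gaussMix k σ Y) = phi α k (v₁ / (v₁ - v₂)) := by
  lift v₁ to ℝ≥0 using h₁.le
  lift v₂ to ℝ≥0 using h₂.le
  rw [NNReal.coe_pos, pos_iff_ne_zero] at h₁ h₂
  have h_ac := multivariateGaussian_add_vecMulVec_absolutelyContinuous hR (.toLp 2 x) h₁ h₂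
  have (v : ℝ≥0) : IsProbabilityMeasure
      ((multivariateGaussian 0 (R + (v : ℝ) • vecMulVec x x)).map WithLp.ofLp) :=
    Measure.isProbabilityMeasure_map (by fun_prop)
  have h_row := renyiDiv_multivariateGaussian_add_vecMulVec α hR hRw (x := .toLp 2 x) hwx h₁ h₂
  rw [gaussMix_eq_pi, gaussMix_eq_pi, hX, hY, renyiDiv_pi α (h_ac.map (by fun_prop)),
    Fintype.card_fin, renyiDiv_map_of_ae_leftInverse α h_ac (by fun_prop)
      (WithLp.measurable_toLp 2 _) (ae_of_all _ fun _ => rfl), phi_eq_mul_phi_one]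
  exact congrArg ((k : ℝ) * ·) (h_row.trans (renyiDiv_gaussianReal_eq_phi 0 h₁ h₂ h_pos))

theorem gram_updateRow_zero (X : Matrix (Fin n) (Fin d) ℝ) (i : Fin n) :
    (X.updateRow i 0)ᵀ * X.updateRow i 0 = Xᵀ * X - vecMulVec (X i) (X i) := by
  ext a b
  have h_rest : ∀ l ∈ Finset.univ.erase i, X.updateRow i 0 l a * X.updateRow i 0 l b
      = X l a * X l b := fun l hl => by
    rw [updateRow_ne (Finset.ne_of_mem_erase hl)]
  simp only [Matrix.sub_apply, mul_apply, transpose_apply, vecMulVec_apply]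
  rw [← Finset.add_sum_erase _ _ (Finset.mem_univ i), Finset.sum_congr rfl h_rest,
    ← Finset.add_sum_erase _ (fun l => X l a * X l b) (Finset.mem_univ i), updateRow_self]
  simp

theorem renyiDiv_gaussMix_updateRow_zero {α σ : ℝ} (k : ℕ) (hσ : 0 < σ)
    {X : Matrix (Fin n) (Fin d) ℝ} {i : Fin n} (hx : X i ≠ 0)
    (hζ : 1 < invLeverage (Xᵀ * X + σ ^ 2 • 1) (X i))
    (hα : α < invLeverage (Xᵀ * X + σ ^ 2 • 1) (X i)) :
    renyiDiv α (gaussMix k σ X) (gaussMix k σ (X.updateRow i 0))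
      = phi α k (invLeverage (Xᵀ * X + σ ^ 2 • 1) (X i)) := by
  have hS := gram_add_sq_posDef hσ X
  rw [renyiDiv_gaussMix_of_gram_eq k (posSemidef_sub_invLeverage_smul hS hx)
    (sub_invLeverage_smul_mulVec hS hx) (invLeverage_smul_inv_dotProduct hS hx)
    (one_pos.trans hζ) (sub_pos.2 hζ) (by rw [sub_add_cancel])
    (by rw [gram_updateRow_zero, sub_smul, one_smul]; abel) (by linarith), sub_sub_cancel, div_one]

theorem renyiDiv_gaussMix_updateRow_zero_symm {α σ : ℝ} (k : ℕ) (hσ : 0 < σ)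
    {X : Matrix (Fin n) (Fin d) ℝ} {i : Fin n} (hx : X i ≠ 0)
    (hζ : 1 < invLeverage (Xᵀ * X + σ ^ 2 • 1) (X i)) (hα : 0 ≤ α) :
    renyiDiv α (gaussMix k σ (X.updateRow i 0)) (gaussMix k σ X)
      = phi α k (1 - invLeverage (Xᵀ * X + σ ^ 2 • 1) (X i)) := by
  have hS := gram_add_sq_posDef hσ X
  rw [renyiDiv_gaussMix_of_gram_eq k (posSemidef_sub_invLeverage_smul hS hx)
    (sub_invLeverage_smul_mulVec hS hx) (invLeverage_smul_inv_dotProduct hS hx)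
    (sub_pos.2 hζ) (one_pos.trans hζ) (by rw [gram_updateRow_zero, sub_smul, one_smul]; abel)
    (by rw [sub_add_cancel]) (by linarith), sub_sub_cancel_left, div_neg, div_one, neg_sub]

end GaussianMixing

section LeverageBound

open scoped MatrixOrder in
theorem lamMin_mul_dotProduct_le {d : ℕ} {A : Matrix (Fin d) (Fin d) ℝ} (hA : A.IsHermitian)
    (y : Fin d → ℝ) : lamMin A * (y ⬝ᵥ y) ≤ y ⬝ᵥ A *ᵥ y := by
  have h_le : algebraMap ℝ (Matrix (Fin d) (Fin d) ℝ) (lamMin A) ≤ A := by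
    rw [algebraMap_le_iff_le_spectrum (ha := hA.isSelfAdjoint),
      hA.spectrum_real_eq_range_eigenvalues, Set.forall_mem_range, lamMin, dif_pos hA]
    exact ciInf_le (Set.finite_range _).bddBelow
  have h_form := (Matrix.le_iff.1 h_le).dotProduct_mulVec_nonneg y
  rw [star_trivial, sub_mulVec, dotProduct_sub, Algebra.algebraMap_eq_smul_one, smul_mulVec,
    one_mulVec, dotProduct_smul, smul_eq_mul] at h_form
  exact sub_nonneg.1 h_form

theorem div_le_invLeverage {ι : Type*} [Fintype ι] [DecidableEq ι] {S : Matrix ι ι ℝ}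
    (hS : S.PosDef) {c b : ℝ} (hc0 : 0 ≤ c) (hc : ∀ y, c * (y ⬝ᵥ y) ≤ y ⬝ᵥ S *ᵥ y)
    {x : ι → ℝ} (hx : x ≠ 0) (hb : 0 < b) (hxb : x ⬝ᵥ x ≤ b) : c / b ≤ invLeverage S x := by
  have h_pos : 0 < x ⬝ᵥ S⁻¹ *ᵥ x := inv_pos.1 (invLeverage_pos hS hx)
  have h_cs : (x ⬝ᵥ S⁻¹ *ᵥ x) ^ 2 ≤ (x ⬝ᵥ x) * ((S⁻¹ *ᵥ x) ⬝ᵥ (S⁻¹ *ᵥ x)) := by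
    simpa only [dotProduct, sq] using Finset.sum_mul_sq_le_sq_mul_sq Finset.univ x (S⁻¹ *ᵥ x)
  have h_form : c * ((S⁻¹ *ᵥ x) ⬝ᵥ (S⁻¹ *ᵥ x)) ≤ x ⬝ᵥ S⁻¹ *ᵥ x := by
    have h := hc (S⁻¹ *ᵥ x)
    rwa [mulVec_mulVec, mul_nonsing_inv S hS.det_pos.ne'.isUnit, one_mulVec,
      dotProduct_comm (S⁻¹ *ᵥ x) x] at h
  rw [invLeverage, ← one_div, div_le_div_iff₀ hb h_pos, one_mul]
  refine le_of_mul_le_mul_right ?_ h_pos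
  calc c * (x ⬝ᵥ S⁻¹ *ᵥ x) * (x ⬝ᵥ S⁻¹ *ᵥ x)
      = c * (x ⬝ᵥ S⁻¹ *ᵥ x) ^ 2 := by ring
    _ ≤ c * ((x ⬝ᵥ x) * ((S⁻¹ *ᵥ x) ⬝ᵥ (S⁻¹ *ᵥ x))) := by gcongr
    _ = (x ⬝ᵥ x) * (c * ((S⁻¹ *ᵥ x) ⬝ᵥ (S⁻¹ *ᵥ x))) := by ring
    _ ≤ b * (x ⬝ᵥ S⁻¹ *ᵥ x) := mul_le_mul hxb h_form
        (mul_nonneg hc0 (by simpa using dotProduct_self_star_nonneg (S⁻¹ *ᵥ x))) hb.le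

theorem gram_add_sq_mul_dotProduct_le {n d : ℕ} {X : Matrix (Fin n) (Fin d) ℝ} {lamBar : ℝ}
    (h_lam : lamBar ≤ lamMin (Xᵀ * X)) (σ : ℝ) (y : Fin d → ℝ) :
    (σ ^ 2 + lamBar) * (y ⬝ᵥ y) ≤ y ⬝ᵥ (Xᵀ * X + σ ^ 2 • 1) *ᵥ y := by
  have h_gram := lamMin_mul_dotProduct_le (isHermitian_conjTranspose_mul_self X) y
  have h_mono := mul_le_mul_of_nonneg_right h_lam (by simpa using dotProduct_self_star_nonneg y)
  rw [conjTranspose_eq_transpose_of_trivial] at h_gram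
  rw [add_mulVec, dotProduct_add, smul_mulVec, one_mulVec, dotProduct_smul, smul_eq_mul]
  linarith

end LeverageBound

/-- the Gaussian mixing mechanism satisfies `(k/(2γ²), 2γ/5)`-tCDP. -/
theorem gaussMix_tCDP {n d : ℕ} (X : Matrix (Fin n) (Fin d) ℝ)
    (CX lamBar σ γ : ℝ) (k : ℕ) (hk : 1 ≤ k)
    (hCX : 0 < CX)
    (hrow : ∀ i, Real.sqrt (∑ j, X i j ^ 2) ≤ CX)
    (hlamBar : 0 ≤ lamBar)
    (hlam : lamBar ≤ lamMin (Xᵀ * X))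
    (hσ : 0 < σ)
    (hγ : γ = (σ ^ 2 + lamBar) / CX ^ 2)
    (hγ1 : 5 / 2 < γ)
    (i : Fin n) (X' : Matrix (Fin n) (Fin d) ℝ) (hX' : X' = X.updateRow i 0)
    (α : ℝ) (hα : α ∈ Set.Ioo 1 (2 * γ / 5)) :
    renyiDiv α (gaussMix k σ X) (gaussMix k σ X') ≤ (k / (2 * γ ^ 2)) * α ∧
      renyiDiv α (gaussMix k σ X') (gaussMix k σ X) ≤ (k / (2 * γ ^ 2)) * α := by
  obtain ⟨hα1, hαγ⟩ := hα
  subst hX'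
  by_cases hx : X i = 0
  · rw [← hx, updateRow_eq_self, renyiDiv_self, and_self]
    positivity
  have hxC : X i ⬝ᵥ X i ≤ CX ^ 2 := by
    simpa only [dotProduct, sq] using (Real.sqrt_le_left hCX.le).1 (hrow i)
  have hγζ : γ ≤ invLeverage (Xᵀ * X + σ ^ 2 • 1) (X i) :=
    hγ ▸ div_le_invLeverage (gram_add_sq_posDef hσ X) (by positivity)
      (gram_add_sq_mul_dotProduct_le hlam σ) hx (sq_pos_of_pos hCX) hxC
  have h_mono : k / (2 * invLeverage (Xᵀ * X + σ ^ 2 • 1) (X i) ^ 2) * α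
      ≤ k / (2 * γ ^ 2) * α := by
    gcongr
  rw [renyiDiv_gaussMix_updateRow_zero k hσ hx (by linarith) (by linarith),
    renyiDiv_gaussMix_updateRow_zero_symm k hσ hx (by linarith) (by linarith)]
  exact ⟨(phi_le k.cast_nonneg hα1 (by linarith)).trans h_mono,
    (phi_one_sub_le k.cast_nonneg hα1 (by linarith)).trans h_mono⟩
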